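/- Fix words w_a, w_{a*}, w_b, w_{b*}. For any finite parameter sets W⁺ (with w_a, w_b ∉ W⁺) and W⁻ (with w_{a*}, w_{b*} ∉ W⁻), writing W^x := {w_x} ∪ W⁺ and W^x_* := {w_{x*}} ∪ W⁻ for x ∈ {a,b}, the total error (ρ^{W^b,W^b_*}_j − ρ^{W^a,W^a_*}_j) + (σ^{W^b}_j − σ^{W^b_*}_j) − (σ^{W^a}_j − σ^{W^a_*}_j) − ((τ^{W^b} − τ^{W^b_*}) − (τ^{W^a} − τ^{W^a_*})) equals PMI(w_{b*}, c_j) − PMI(w_{a*}, c_j) + PMI(w_a, c_j) − PMI(w_b, c_j) for every j; in particular this total error is the same for every choice of parameter sets W⁺, W⁻. (Exact form of the paper's Corollary 8: transformation parameter equivalence.) -/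

import Mathlib

open MeasureTheory Real Finset Matrix

namespace AnalogiesExplained

variable {Ω : Type*}

/-- Conditional probability `p(B ∣ A) = μ(A ∩ B) / μ(A)` (as a real number). -/
noncomputable def condP [MeasurableSpace Ω] (μ : Measure Ω) (A B : Set Ω) : ℝ :=
  (μ (A ∩ B)).toReal / (μ A).toReal

/-- Pointwise mutual information `PMI(A, B) = log (μ(A ∩ B) / (μ(A)·μ(B)))`. -/
noncomputable def PMI [MeasurableSpace Ω] (μ : Measure Ω) (A B : Set Ω) : ℝ :=
  Real.log ((μ (A ∩ B)).toReal / ((μ A).toReal * (μ B).toReal))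

/-- The joint event of a finite word set: `A_W = ⋂ i ∈ W, A i`. -/
def jointEvent {ι : Type*} (A : ι → Set Ω) (W : Finset ι) : Set Ω :=
  ⋂ i ∈ W, A i

/-- Paraphrase error `ρ^{W,W*}_j = log (p(B_j ∣ A_{W*}) / p(B_j ∣ A_W))`. -/
noncomputable def rho [MeasurableSpace Ω] (μ : Measure Ω) (AW AWstar B : Set Ω) : ℝ :=
  Real.log (condP μ AWstar B / condP μ AW B)

/-- Conditional-dependence error `σ^W_j = log (p(A_W ∣ B_j) / ∏_{i ∈ W} p(A_i ∣ B_j))`. -/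
noncomputable def sigma [MeasurableSpace Ω] {ι : Type*} (μ : Measure Ω) (A : ι → Set Ω)
    (W : Finset ι) (B : Set Ω) : ℝ :=
  Real.log (condP μ B (jointEvent A W) / ∏ i ∈ W, condP μ B (A i))

/-- Marginal-dependence error `τ^W = log (μ(A_W) / ∏_{i ∈ W} μ(A_i))`. -/
noncomputable def tau [MeasurableSpace Ω] {ι : Type*} (μ : Measure Ω) (A : ι → Set Ω)
    (W : Finset ι) : ℝ :=
  Real.log ((μ (jointEvent A W)).toReal / ∏ i ∈ W, (μ (A i)).toReal)

/-!
The pointwise mutual information of the joint event `A_W` with `B` links the three errors: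
`σ^W - τ^W` is its excess over the sum of the PMIs of the words of `W`, and `ρ^{W,W_*}` is its
increase from `W` to `W_*`. Adding these up, the PMIs of the joint events cancel, and what a
paraphrase of `W` by `W_*` contributes is `∑_{W_*} PMI - ∑_W PMI`. In the difference of two
paraphrases with the same parameter sets, the sums over the parameter sets cancel too.
-/

section FiniteMeasure

variable [MeasurableSpace Ω] {μ : Measure Ω} [IsFiniteMeasure μ]

theorem toReal_measure_pos_of_subset {s t : Set Ω} (hst : s ⊆ t) (hs : 0 < (μ s).toReal) :
    0 < (μ t).toReal :=
  hs.trans_le (measureReal_mono hst)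

theorem condP_pos {S B : Set Ω} (h : 0 < (μ (S ∩ B)).toReal) : 0 < condP μ S B :=
  div_pos h (toReal_measure_pos_of_subset Set.inter_subset_left h)

theorem PMI_eq_log_condP_sub_log {S B : Set Ω} (h : 0 < (μ (S ∩ B)).toReal) :
    PMI μ S B = log (condP μ S B) - log (μ B).toReal := by
  have hB : 0 < (μ B).toReal := toReal_measure_pos_of_subset Set.inter_subset_right h
  rw [← log_div (condP_pos h).ne' hB.ne', PMI, condP, div_div]

theorem rho_eq_PMI_sub_PMI {U V B : Set Ω} (hU : 0 < (μ (U ∩ B)).toReal)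
    (hV : 0 < (μ (V ∩ B)).toReal) : rho μ U V B = PMI μ V B - PMI μ U B := by
  rw [rho, log_div (condP_pos hV).ne' (condP_pos hU).ne', PMI_eq_log_condP_sub_log hU,
    PMI_eq_log_condP_sub_log hV, sub_sub_sub_cancel_right]

end FiniteMeasure

theorem PMI_comm [MeasurableSpace Ω] (μ : Measure Ω) (S B : Set Ω) : PMI μ S B = PMI μ B S := by
  rw [PMI, PMI, Set.inter_comm, mul_comm]

theorem log_div_prod {ι : Type*} {W : Finset ι} {x : ℝ} {f : ι → ℝ} (hx : x ≠ 0)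
    (hf : ∀ i ∈ W, f i ≠ 0) : log (x / ∏ i ∈ W, f i) = log x - ∑ i ∈ W, log (f i) := by
  rw [log_div hx (prod_ne_zero_iff.2 hf), log_prod hf]

theorem jointEvent_subset {ι : Type*} {A : ι → Set Ω} {W : Finset ι} {i : ι} (hi : i ∈ W) :
    jointEvent A W ⊆ A i :=
  Set.biInter_subset_of_mem hi

/-- The total error in paraphrasing the word set `W` by `Wstar`, as seen from the context event
`B`: the paraphrase error together with the changes in the two dependence errors. -/
noncomputable def paraphraseTotalError [MeasurableSpace Ω] {ι : Type*} (μ : Measure Ω)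
    (A : ι → Set Ω) (W Wstar : Finset ι) (B : Set Ω) : ℝ :=
  rho μ (jointEvent A W) (jointEvent A Wstar) B
    + (sigma μ A W B - sigma μ A Wstar B) - (tau μ A W - tau μ A Wstar)

section WordSets

variable [MeasurableSpace Ω] {μ : Measure Ω} [IsFiniteMeasure μ] {ι : Type*} {A : ι → Set Ω}
  {W Wstar : Finset ι} {B : Set Ω}

theorem sigma_eq_log_sub_sum (h : 0 < (μ (B ∩ jointEvent A W)).toReal) :
    sigma μ A W B = log (condP μ B (jointEvent A W)) - ∑ i ∈ W, log (condP μ B (A i)) :=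
  log_div_prod (condP_pos h).ne' fun _ hi =>
    (condP_pos (toReal_measure_pos_of_subset
      (Set.inter_subset_inter_right B (jointEvent_subset hi)) h)).ne'

theorem tau_eq_log_sub_sum (h : 0 < (μ (jointEvent A W)).toReal) :
    tau μ A W = log (μ (jointEvent A W)).toReal - ∑ i ∈ W, log (μ (A i)).toReal :=
  log_div_prod h.ne' fun _ hi => (toReal_measure_pos_of_subset (jointEvent_subset hi) h).ne'

theorem sigma_sub_tau (h : 0 < (μ (jointEvent A W ∩ B)).toReal) :
    sigma μ A W B - tau μ A W = PMI μ (jointEvent A W) B - ∑ i ∈ W, PMI μ (A i) B := by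
  have hBW : 0 < (μ (B ∩ jointEvent A W)).toReal := by rwa [Set.inter_comm]
  have hW : 0 < (μ (jointEvent A W)).toReal :=
    toReal_measure_pos_of_subset Set.inter_subset_left h
  have hPMI : ∀ i ∈ W, PMI μ (A i) B = log (condP μ B (A i)) - log (μ (A i)).toReal :=
    fun i hi => by
      rw [PMI_comm, PMI_eq_log_condP_sub_log (toReal_measure_pos_of_subset
        (Set.inter_subset_inter_right B (jointEvent_subset hi)) hBW)]
  rw [sigma_eq_log_sub_sum hBW, tau_eq_log_sub_sum hW, PMI_comm, PMI_eq_log_condP_sub_log hBW,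
    sum_congr rfl hPMI, sum_sub_distrib, sub_sub_sub_comm]

theorem paraphraseTotalError_eq_sum_PMI_sub_sum_PMI
    (hW : 0 < (μ (jointEvent A W ∩ B)).toReal)
    (hWstar : 0 < (μ (jointEvent A Wstar ∩ B)).toReal) :
    paraphraseTotalError μ A W Wstar B
      = ∑ i ∈ Wstar, PMI μ (A i) B - ∑ i ∈ W, PMI μ (A i) B := by
  have hρ := rho_eq_PMI_sub_PMI hW hWstar
  have hστ := sigma_sub_tau hW
  have hστ_star := sigma_sub_tau hWstar
  rw [paraphraseTotalError]
  linarith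

theorem total_error_parameter_invariant_general [DecidableEq ι] {a astar b bstar : ι}
    {Wp Wm : Finset ι} (ha : a ∉ Wp) (hb : b ∉ Wp) (hastar : astar ∉ Wm) (hbstar : bstar ∉ Wm)
    (hWa : 0 < (μ (jointEvent A (insert a Wp) ∩ B)).toReal)
    (hWb : 0 < (μ (jointEvent A (insert b Wp) ∩ B)).toReal)
    (hWastar : 0 < (μ (jointEvent A (insert astar Wm) ∩ B)).toReal)
    (hWbstar : 0 < (μ (jointEvent A (insert bstar Wm) ∩ B)).toReal) :
    paraphraseTotalError μ A (insert b Wp) (insert bstar Wm) B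
        - paraphraseTotalError μ A (insert a Wp) (insert astar Wm) B
      = PMI μ (A bstar) B - PMI μ (A astar) B + PMI μ (A a) B - PMI μ (A b) B := by
  rw [paraphraseTotalError_eq_sum_PMI_sub_sum_PMI hWb hWbstar,
    paraphraseTotalError_eq_sum_PMI_sub_sum_PMI hWa hWastar,
    sum_insert ha, sum_insert hb, sum_insert hastar, sum_insert hbstar]
  ring

end WordSets

/-- **Corollary 8 (Transformation parameter equivalence, exact form).** For any parameter sets
`W⁺, W⁻`, the total error of the analogy identity equals
`PMI(w_{b*},c_j) − PMI(w_{a*},c_j) + PMI(w_a,c_j) − PMI(w_b,c_j)` for every `j`; in particular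
it is the same for every choice of `W⁺, W⁻`. -/
theorem total_error_parameter_invariant
    [MeasurableSpace Ω] (μ : Measure Ω) [IsProbabilityMeasure μ]
    {ι : Type*} [DecidableEq ι] (A : ι → Set Ω) {n : ℕ} (B : Fin n → Set Ω)
    (a astar b bstar : ι)
    (hmA : ∀ i, MeasurableSet (A i)) (hmB : ∀ j, MeasurableSet (B j))
    (Wp Wm : Finset ι)
    (ha : a ∉ Wp) (hb : b ∉ Wp) (has : astar ∉ Wm) (hbs : bstar ∉ Wm)
    (hA : ∀ i ∈ insert a (insert b Wp) ∪ insert astar (insert bstar Wm),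
      0 < (μ (A i)).toReal)
    (hB : ∀ j, 0 < (μ (B j)).toReal)
    (hAWa : 0 < (μ (jointEvent A (insert a Wp))).toReal)
    (hAWb : 0 < (μ (jointEvent A (insert b Wp))).toReal)
    (hAWas : 0 < (μ (jointEvent A (insert astar Wm))).toReal)
    (hAWbs : 0 < (μ (jointEvent A (insert bstar Wm))).toReal)
    (hAB : ∀ i ∈ insert a (insert b Wp) ∪ insert astar (insert bstar Wm),
      ∀ j, 0 < (μ (A i ∩ B j)).toReal)
    (hAWaB : ∀ j, 0 < (μ (jointEvent A (insert a Wp) ∩ B j)).toReal)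
    (hAWbB : ∀ j, 0 < (μ (jointEvent A (insert b Wp) ∩ B j)).toReal)
    (hAWasB : ∀ j, 0 < (μ (jointEvent A (insert astar Wm) ∩ B j)).toReal)
    (hAWbsB : ∀ j, 0 < (μ (jointEvent A (insert bstar Wm) ∩ B j)).toReal) :
    ∀ j,
      (rho μ (jointEvent A (insert b Wp)) (jointEvent A (insert bstar Wm)) (B j)
          - rho μ (jointEvent A (insert a Wp)) (jointEvent A (insert astar Wm)) (B j))
        + (sigma μ A (insert b Wp) (B j) - sigma μ A (insert bstar Wm) (B j))
        - (sigma μ A (insert a Wp) (B j) - sigma μ A (insert astar Wm) (B j))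
        - ((tau μ A (insert b Wp) - tau μ A (insert bstar Wm))
            - (tau μ A (insert a Wp) - tau μ A (insert astar Wm)))
      = PMI μ (A bstar) (B j) - PMI μ (A astar) (B j)
          + PMI μ (A a) (B j) - PMI μ (A b) (B j) := by
  intro j
  rw [← total_error_parameter_invariant_general ha hb has hbs (hAWaB j) (hAWbB j) (hAWasB j)
    (hAWbsB j), paraphraseTotalError, paraphraseTotalError]
  ring

end AnalogiesExplained
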